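/- Let F ⊆ 𝖱^n be closed and unbounded (i.e., F is not contained in [0,z]^n for any z ∈ 𝖱). Then there exist a nonempty subset I ⊆ N = {1,…,n} and c ∈ 𝖱^{N∖I} such that Δ_I(c) ∩ F is closed and unbounded in Δ_I(c). -/

import Mathlib

noncomputable section
open Set

/-- The first uncountable ordinal `ω₁`. -/
def Omega1 : Ordinal := Ordinal.omega 1

/-- The closed long ray `𝖱`: `ω₁ × [0,1)` with the lexicographic order. -/
def LongRay : Type 1 := {o : Ordinal // o < Omega1} ×ₗ (Set.Ico (0:ℝ) 1)

instance : LinearOrder LongRay :=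
  inferInstanceAs (LinearOrder ({o : Ordinal // o < Omega1} ×ₗ (Set.Ico (0:ℝ) 1)))

/-- `𝖱` carries the order topology. -/
instance : TopologicalSpace LongRay := Preorder.topology LongRay
instance : OrderTopology LongRay := ⟨rfl⟩

lemma omega1_pos : (0 : Ordinal) < Omega1 := Ordinal.omega_pos 1

/-- The point `0 = (0,0)` of the long ray. -/
def rayZero : LongRay := toLex (⟨0, omega1_pos⟩, ⟨0, by simp⟩)

/-- Identification of the countable ordinal `o` with the point `(o,0)` of the long ray
(junk value for `o ≥ ω₁`). -/
def ordR (o : Ordinal) : LongRay :=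
  if h : o < Omega1 then toLex (⟨o, h⟩, ⟨0, by simp⟩) else rayZero

/-- The `I`-diagonal at height `c` (only the values of `c` off `I` are relevant). -/
def Delta (n : ℕ) (I : Finset (Fin n)) (c : Fin n → LongRay) : Set (Fin n → LongRay) :=
  {x | (∀ i ∈ I, ∀ i' ∈ I, x i = x i') ∧ ∀ j ∉ I, x j = c j}

/-- `f` is `I`-cofinal if `f` restricted to `Δ_I = Δ_I(0)` is unbounded. -/
def ICofinal (n : ℕ) (f : (Fin n → LongRay) → LongRay) (I : Finset (Fin n)) : Prop :=
  ¬ BddAbove (f '' Delta n I (fun _ => rayZero))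

/-- The cofinality class `𝔠(f) = {I : f is I-cofinal}`. -/
def cofClass (n : ℕ) (f : (Fin n → LongRay) → LongRay) : Set (Finset (Fin n)) :=
  {I | ICofinal n f I}

/-- `M_I(c) = {x : x_i ≥ c for all i ∈ I}`. -/
def MSet (n : ℕ) (I : Finset (Fin n)) (c : LongRay) : Set (Fin n → LongRay) :=
  {x | ∀ i ∈ I, c ≤ x i}

/-- `E_I(b,d) = {x ∈ M_I(d) : x_j = b_j for all j ∉ I}`. -/
def ESet (n : ℕ) (I : Finset (Fin n)) (b : Fin n → LongRay) (d : LongRay) :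
    Set (Fin n → LongRay) :=
  {x | (∀ i ∈ I, d ≤ x i) ∧ ∀ j ∉ I, x j = b j}

open Filter Topology

/-- A cluster point, in the directions off `I`, of points of a closed set escaping to infinity
in the directions of `I`, yields points of the set far out on the corresponding diagonal. -/
theorem IsClosed.exists_mem_diagonal_of_frequently {X : Type*} [LinearOrder X]
    [TopologicalSpace X] [OrderTopology X] [FirstCountableTopology X]
    (hconv : ∀ u : ℕ → X, StrictMono u → ∃ a, Tendsto u atTop (𝓝 a))
    {ι : Type*} [Finite ι] {F : Set (ι → X)} (hF : IsClosed F) {I : Set ι} (hI : I.Nonempty)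
    (c : ι → X)
    (h : ∀ U : ι → Set X, (∀ j, U j ∈ 𝓝 (c j)) → ∀ z,
      ∃ x ∈ F, (∀ i ∈ I, z < x i) ∧ ∀ j ∉ I, x j ∈ U j) (z : X) :
    ∃ x ∈ F, (∃ s, z < s ∧ ∀ i ∈ I, x i = s) ∧ ∀ j ∉ I, x j = c j := by
  classical
  have := Fintype.ofFinite ι
  obtain ⟨i₀, hi₀⟩ := hI
  choose V hV using fun j => (𝓝 (c j)).exists_antitone_basis
  choose f hfF hfI hfc using fun k => h (fun j => V j k) (fun j => (hV j).mem k)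
  let g : (ι → X) → X := fun x => Finset.univ.sup' ⟨i₀, Finset.mem_univ _⟩ x
  have hg : ∀ x i, x i ≤ g x := fun x i => Finset.le_sup' x (Finset.mem_univ i)
  let w : ℕ → X := fun k => Nat.rec z (fun k y => g (f k y)) k
  have hw : ∀ k, w (k + 1) = g (f k (w k)) := fun k => rfl
  have hmono : StrictMono w := strictMono_nat_of_lt_succ fun k =>
    (hfI k (w k) i₀ hi₀).trans_le ((hg _ _).trans_eq (hw k).symm)
  obtain ⟨s, hs⟩ := hconv w hmono
  refine ⟨fun j => if j ∈ I then s else c j, ?_, ⟨s, ?_, fun i hi => if_pos hi⟩,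
    fun j hj => if_neg hj⟩
  · refine hF.mem_of_tendsto (f := fun k => f k (w k)) (b := atTop) ?_
      (Eventually.of_forall fun k => hfF k (w k))
    refine tendsto_pi_nhds.2 fun j => ?_
    by_cases hj : j ∈ I
    · simp only [hj, if_true]
      exact tendsto_of_tendsto_of_tendsto_of_le_of_le hs (hs.comp (tendsto_add_atTop_nat 1))
        (fun k => (hfI k (w k) j hj).le) fun k => (hg _ j).trans_eq (hw k).symm
    · simp only [hj, if_false]
      exact (hV j).tendsto fun k => hfc k (w k) j hj
  · exact (hmono zero_lt_one).trans_le (hmono.monotone.ge_of_tendsto hs 1)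

/-- An unbounded set in a finite power goes to infinity exactly along some nonempty set of
coordinates while the other coordinates stay bounded. -/
theorem exists_maximal_unbounded_coordinates {X : Type*} [LinearOrder X] [Nonempty X]
    {ι : Type*} [Finite ι] {F : Set (ι → X)} (hF : ¬ ∃ z, ∀ x ∈ F, ∀ i, x i ≤ z) :
    ∃ I : Set ι, I.Nonempty ∧ ∃ b, ∀ z, ∃ x ∈ F, (∀ i ∈ I, z < x i) ∧ ∀ j ∉ I, x j ≤ b := by
  have hbdd : ∀ p : ι → X, ∃ b, ∀ i, p i ≤ b := fun p => by
    obtain ⟨b, hb⟩ := (finite_range p).bddAbove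
    exact ⟨b, fun i => hb (mem_range_self i)⟩
  let S : Set (Set ι) := {I | I.Nonempty ∧ ∀ z, ∃ x ∈ F, ∀ i ∈ I, z < x i}
  have hS : S.Nonempty := by
    by_contra hS
    have h : ∀ i : ι, ∃ z, ∀ x ∈ F, x i ≤ z := by
      by_contra! h
      obtain ⟨i, hi⟩ := h
      exact hS ⟨{i}, singleton_nonempty i, by simpa using hi⟩
    choose p hp using h
    obtain ⟨b, hb⟩ := hbdd p
    exact hF ⟨b, fun x hx i => (hp i x hx).trans (hb i)⟩
  obtain ⟨I, hI⟩ := (Set.toFinite S).exists_maximal hS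
  have h : ∀ j, ∃ z, j ∉ I → ∀ x ∈ F, (∀ i ∈ I, z < x i) → x j ≤ z := by
    intro j
    by_contra! h
    have hmem : insert j I ∈ S := by
      refine ⟨insert_nonempty _ _, fun z => ?_⟩
      obtain ⟨-, x, hx, hxI, hxj⟩ := h z
      exact ⟨x, hx, forall_mem_insert.2 ⟨hxj, hxI⟩⟩
    obtain ⟨z⟩ := ‹Nonempty X›
    exact (h z).1 (hI.le_of_ge hmem (subset_insert _ _) (mem_insert _ _))
  choose p hp using h
  obtain ⟨b, hb⟩ := hbdd p
  refine ⟨I, hI.prop.1, b, fun z => ?_⟩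
  obtain ⟨x, hx, hxI⟩ := hI.prop.2 (max z b)
  exact ⟨x, hx, fun i hi => (le_max_left _ _).trans_lt (hxI i hi), fun j hj =>
    (hp j hj x hx fun i hi => ((hb j).trans (le_max_right _ _)).trans_lt (hxI i hi)).trans (hb j)⟩

/-- A closed unbounded set in a finite power of a suitable linear order meets some diagonal in an
unbounded set. -/
theorem IsClosed.exists_unbounded_diagonal {X : Type*} [LinearOrder X] [OrderBot X]
    [TopologicalSpace X] [OrderTopology X] [FirstCountableTopology X] [CompactIccSpace X]
    (hconv : ∀ u : ℕ → X, StrictMono u → ∃ a, Tendsto u atTop (𝓝 a))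
    {ι : Type*} [Finite ι] {F : Set (ι → X)} (hF : IsClosed F)
    (hunbd : ¬ ∃ z, ∀ x ∈ F, ∀ i, x i ≤ z) :
    ∃ I : Set ι, I.Nonempty ∧ ∃ c : ι → X, ∀ z,
      ∃ x ∈ F, (∃ s, z < s ∧ ∀ i ∈ I, x i = s) ∧ ∀ j ∉ I, x j = c j := by
  classical
  obtain ⟨I, hI, b, h⟩ := exists_maximal_unbounded_coordinates hunbd
  choose y hyF hyI hyb using h
  let q : X → ι → X := fun z j => if j ∈ I then ⊥ else y z j
  have hq : ∀ z, q z ∈ Icc (⊥ : ι → X) (fun _ => b) := fun z => by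
    refine ⟨bot_le, fun j => ?_⟩
    by_cases hj : j ∈ I
    · simp [q, hj]
    · simpa [q, hj] using hyb z j hj
  obtain ⟨c, -, hc⟩ := (isCompact_Icc (a := (⊥ : ι → X)) (b := fun _ => b)).exists_mapClusterPt
    (f := atTop) (u := q) (tendsto_principal.2 (Eventually.of_forall hq))
  refine ⟨I, hI, c, hF.exists_mem_diagonal_of_frequently hconv hI c fun U hU z => ?_⟩
  have hfreq := hc.frequently (p := fun x => ∀ j, x j ∈ U j)
    (eventually_all.2 fun j => (continuous_apply j).continuousAt.eventually (hU j))
  obtain ⟨w, hzw, hw⟩ := frequently_atTop.1 hfreq z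
  exact ⟨y w, hyF w, fun i hi => hzw.trans_lt (hyI w i hi), fun j hj => by
    simpa [q, hj] using hw j⟩

namespace LongRay

instance : OrderBot LongRay where
  bot := rayZero
  bot_le x := Prod.Lex.le_iff.2 <| by
    rcases (bot_le : (0 : Ordinal) ≤ (ofLex x).1.1).eq_or_lt with h | h
    · exact Or.inr ⟨Subtype.ext h, (ofLex x).2.2.1⟩
    · exact Or.inl h

theorem exists_isGLB {s : Set LongRay} (hs : s.Nonempty) : ∃ a, IsGLB s a := by
  let A := (fun x : LongRay => (ofLex x).1) '' s
  have hA : A.Nonempty := hs.image _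
  let o := wellFounded_lt.min A hA
  obtain ⟨x₀, hx₀, hx₀o⟩ : o ∈ A := wellFounded_lt.min_mem A hA
  have ho : ∀ x ∈ s, o ≤ (ofLex x).1 := fun x hx =>
    wellFounded_lt.min_le (mem_image_of_mem (fun x : LongRay => (ofLex x).1) hx)
  let T : Set ℝ := {t | ∃ x ∈ s, (ofLex x).1 = o ∧ ((ofLex x).2 : ℝ) = t}
  have hT₀ : ((ofLex x₀).2 : ℝ) ∈ T := ⟨x₀, hx₀, hx₀o, rfl⟩
  have hT : ∀ t ∈ T, 0 ≤ t := by
    rintro _ ⟨x, -, -, rfl⟩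
    exact (ofLex x).2.2.1
  have hglb : IsGLB T (sInf T) := isGLB_csInf ⟨_, hT₀⟩ ⟨0, hT⟩
  let a : LongRay := toLex (o, ⟨sInf T, le_csInf ⟨_, hT₀⟩ hT,
    (hglb.1 hT₀).trans_lt (ofLex x₀).2.2.2⟩)
  refine ⟨a, fun x hx => Prod.Lex.le_iff.2 ?_, fun y hy => Prod.Lex.le_iff.2 ?_⟩
  · rcases (ho x hx).eq_or_lt with h | h
    · exact Or.inr ⟨h, hglb.1 ⟨x, hx, h.symm, rfl⟩⟩
    · exact Or.inl h
  · have hyo : (ofLex y).1 ≤ o := by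
      rcases Prod.Lex.le_iff.1 (hy hx₀) with h | h
      · exact (h.trans_eq hx₀o).le
      · exact (h.1.trans hx₀o).le
    rcases hyo.eq_or_lt with h | h
    · refine Or.inr ⟨h, hglb.2 ?_⟩
      rintro _ ⟨x, hx, hxo, rfl⟩
      rcases Prod.Lex.le_iff.1 (hy hx) with h' | h'
      · exact absurd (h.trans hxo.symm) h'.ne
      · exact h'.2
    · exact Or.inl h

open scoped Classical in
/-- The long ray is conditionally complete. -/
abbrev conditionallyCompleteLinearOrder : ConditionallyCompleteLinearOrder LongRay where
  __ := (inferInstance : LinearOrder LongRay)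
  __ := LinearOrder.toLattice
  __ :=
    letI : InfSet LongRay :=
      ⟨fun s => if hs : s.Nonempty then (exists_isGLB hs).choose else ⊥⟩
    conditionallyCompleteLatticeOfLatticeOfsInf LongRay fun s _ hn => by
      change IsGLB s (if hs : s.Nonempty then (exists_isGLB hs).choose else ⊥)
      simpa only [dif_pos hn] using (exists_isGLB hn).choose_spec
  csSup_of_not_bddAbove s H := by
    have h := (exists_isGLB (univ_nonempty (α := LongRay))).choose_spec.1 (mem_univ ⊥)
    rw [BddAbove] at H
    simpa [sSup, H] using bot_le.antisymm h
  csInf_of_not_bddBelow s H := (H (OrderBot.bddBelow s)).elim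

instance : CompactIccSpace LongRay :=
  @ConditionallyCompleteLinearOrder.toCompactIccSpace LongRay conditionallyCompleteLinearOrder _ _

theorem bddAbove_range_of_countable {ι : Type*} [Countable ι] (u : ι → LongRay) :
    BddAbove (range u) := by
  have h : Order.succ (⨆ k, (ofLex (u k)).1.1) < Omega1 :=
    (Cardinal.isSuccLimit_omega 1).succ_lt
      (Ordinal.iSup_lt_omega_one fun k => (ofLex (u k)).1.2)
  refine ⟨toLex (⟨_, h⟩, ⟨0, by simp⟩), ?_⟩
  rintro _ ⟨k, rfl⟩
  exact Prod.Lex.le_iff.2 (Or.inl (Order.lt_succ_of_le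
    (Ordinal.le_iSup (fun k => (ofLex (u k)).1.1) k)))

theorem exists_tendsto_of_monotone {u : ℕ → LongRay} (hu : Monotone u) :
    ∃ a, Tendsto u atTop (𝓝 a) := by
  obtain ⟨a, ha⟩ := exists_isGLB (bddAbove_range_of_countable u)
  exact ⟨a, tendsto_atTop_isLUB hu (isGLB_upperBounds.1 ha)⟩

theorem countable_Iic (o : {o : Ordinal // o < Omega1}) : (Iic o).Countable := by
  have h : (Iic o.1).Countable := by
    have ho : o.1.card ≤ Cardinal.aleph0 := by
      rw [← Cardinal.lt_aleph_one_iff, ← Cardinal.lt_ord, Cardinal.ord_aleph]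
      exact o.2
    rw [← Iio_insert]
    refine Countable.insert _ (Cardinal.le_aleph0_iff_set_countable.1 ?_)
    rw [Cardinal.mk_Iio_ordinal]
    exact Cardinal.lift_le_aleph0.2 ho
  exact h.preimage Subtype.val_injective

/-- The points with rational second coordinate below the end of the unit interval containing `c`. -/
def rationalsUpTo (c : LongRay) : Set LongRay :=
  {x | (ofLex x).1 ≤ (ofLex c).1 ∧ ((ofLex x).2 : ℝ) ∈ range ((↑) : ℚ → ℝ)}

theorem countable_rationalsUpTo (c : LongRay) : (rationalsUpTo c).Countable := by
  have h : (Iic (ofLex c).1 ×ˢ ((↑) ⁻¹' range ((↑) : ℚ → ℝ) : Set (Ico (0 : ℝ) 1))).Countable :=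
    (countable_Iic _).prod ((countable_range _).preimage Subtype.val_injective)
  exact h.preimage ofLex.injective

theorem exists_rationalsUpTo_between {a b c : LongRay} (hac : a ≤ c) (hab : a < b) :
    ∃ d ∈ rationalsUpTo c, a < d ∧ d < b := by
  have hle : (ofLex a).1 ≤ (ofLex c).1 := by
    rcases Prod.Lex.le_iff.1 hac with h | h
    exacts [h.le, h.1.le]
  have key : ∀ r : ℝ, (ofLex a).2 < r → r ≤ 1 → ∃ d ∈ rationalsUpTo c, a < d ∧
      (ofLex d).1 = (ofLex a).1 ∧ ((ofLex d).2 : ℝ) < r := by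
    intro r har hr
    obtain ⟨q, haq, hqr⟩ := exists_rat_btwn har
    exact ⟨toLex ((ofLex a).1, ⟨q, (ofLex a).2.2.1.trans haq.le, hqr.trans_le hr⟩),
      ⟨hle, q, rfl⟩, Prod.Lex.lt_iff.2 (Or.inr ⟨rfl, haq⟩), rfl, hqr⟩
  rcases Prod.Lex.lt_iff.1 hab with h | ⟨h, h'⟩
  · obtain ⟨d, hd, had, hda, -⟩ := key 1 (ofLex a).2.2.2 le_rfl
    exact ⟨d, hd, had, Prod.Lex.lt_iff.2 (Or.inl (hda.trans_lt h))⟩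
  · obtain ⟨d, hd, had, hda, hdr⟩ := key (ofLex b).2 h' (ofLex b).2.2.2.le
    exact ⟨d, hd, had, Prod.Lex.lt_iff.2 (Or.inr ⟨hda.trans h, hdr⟩)⟩

instance : FirstCountableTopology LongRay where
  nhds_generated_countable c := by
    have hS := (countable_rationalsUpTo c).to_subtype
    have h : 𝓝 c = (⨅ d : rationalsUpTo c, ⨅ _ : d.1 < c, 𝓟 (Ioi d.1)) ⊓
        ⨅ d : rationalsUpTo c, ⨅ _ : c < d.1, 𝓟 (Iio d.1) := by
      rw [nhds_eq_order]
      congr 1 <;> apply le_antisymm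
      · exact le_iInf₂ fun d hd => iInf₂_le d.1 hd
      · refine le_iInf₂ fun a ha => ?_
        obtain ⟨d, hd, had, hdc⟩ := exists_rationalsUpTo_between (le_of_lt ha) ha
        exact iInf₂_le_of_le ⟨d, hd⟩ hdc (principal_mono.2 (Ioi_subset_Ioi had.le))
      · exact le_iInf₂ fun d hd => iInf₂_le d.1 hd
      · refine le_iInf₂ fun a ha => ?_
        obtain ⟨d, hd, hcd, hda⟩ := exists_rationalsUpTo_between le_rfl ha
        exact iInf₂_le_of_le ⟨d, hd⟩ hcd (principal_mono.2 (Iio_subset_Iio hda.le))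
    rw [h]
    infer_instance

end LongRay

/-- structure of closed unbounded sets: a closed unbounded `F ⊆ 𝖱ⁿ` meets
some diagonal `Δ_I(c)` (`I ≠ ∅`) in a set which is closed and unbounded in `Δ_I(c)`. -/
theorem structure_of_closed_unbounded_sets (n : ℕ) (F : Set (Fin n → LongRay))
    (hclosed : IsClosed F)
    (hunbd : ¬ ∃ z : LongRay, ∀ x ∈ F, ∀ i, x i ≤ z) :
    ∃ I : Finset (Fin n), I.Nonempty ∧ ∃ c : Fin n → LongRay,
      IsClosed (Subtype.val ⁻¹' F : Set ↥(Delta n I c)) ∧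
      ¬ ∃ z : LongRay, ∀ x ∈ Delta n I c ∩ F, ∀ i ∈ I, x i ≤ z := by
  classical
  obtain ⟨I, hI, c, h⟩ := hclosed.exists_unbounded_diagonal
    (fun u hu => LongRay.exists_tendsto_of_monotone hu.monotone) hunbd
  refine ⟨I.toFinset, by simpa using hI, c, hclosed.preimage continuous_subtype_val, ?_⟩
  rintro ⟨z, hz⟩
  obtain ⟨x, hxF, ⟨s, hzs, hs⟩, hxc⟩ := h z
  obtain ⟨i, hi⟩ := hI
  refine hzs.not_ge ((hs i hi).symm.trans_le (hz x ⟨⟨?_, ?_⟩, hxF⟩ i (by simpa using hi)))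
  · intro i hi i' hi'
    rw [hs i (by simpa using hi), hs i' (by simpa using hi')]
  · intro j hj
    exact hxc j (by simpa using hj)
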